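/- The series ∑_{k=2}^{∞} (2k−3)! / ((k−2)!·k!·2^{2k−2}) converges and its sum equals 1/2. Equivalently, with q₀ = −1, q₁ = 1/2 and qₖ = (2k−3)! / ((k−2)!·k!·2^{2k−2}) for k ≥ 2, one has ∑_{k=0}^{∞} qₖ = 0. -/

import Mathlib

/-!
With `c n = (2n choose n) / 4 ^ n`, the `k`-th term of the series equals `c (k + 1) - c (k + 2)`
(`term_eq_sub`), so the partial sums telescope to `c 1 - c (n + 1) = 1 / 2 - c (n + 1)`.
The ratio `c (n + 1) / c n = (2n + 1) / (2n + 2)` gives `(2n + 1) * c n ^ 2 ≤ 1` by induction, hence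
`c n → 0`. As the terms are nonnegative, convergence of the partial sums gives summability.
The sum of `qCoeff` follows by adding the two initial terms `-1` and `1 / 2`.
-/

open Real

/-- The entries of each row of the Catalan Markov chain generator:
`q₀ = −1`, `q₁ = 1/2` and `qₖ = (2k−3)! / ((k−2)!·k!·2^{2k−2})` for `k ≥ 2`. -/
noncomputable def qCoeff : ℕ → ℝ := fun k =>
  if k = 0 then -1
  else if k = 1 then 1 / 2
  else (Nat.factorial (2 * k - 3) : ℝ) /
    ((Nat.factorial (k - 2) : ℝ) * (Nat.factorial k : ℝ) * 2 ^ (2 * k - 2))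

open Filter Topology

/-- The normalized central binomial coefficient `(2n choose n) / 4 ^ n`, written with factorials. -/
noncomputable def normCentral (n : ℕ) : ℝ :=
  (Nat.factorial (2 * n) : ℝ) / ((Nat.factorial n : ℝ) ^ 2 * 4 ^ n)

lemma normCentral_nonneg (n : ℕ) : 0 ≤ normCentral n := by
  unfold normCentral; positivity

lemma normCentral_one : normCentral 1 = 1 / 2 := by
  norm_num [normCentral, Nat.factorial]

lemma normCentral_succ (n : ℕ) :
    normCentral (n + 1) = normCentral n * ((2 * n + 1) / (2 * n + 2)) := by
  have h : (Nat.factorial n : ℝ) ≠ 0 := by positivity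
  have h2 : (n : ℝ) + 1 ≠ 0 := by positivity
  unfold normCentral
  rw [show 2 * (n + 1) = 2 * n + 1 + 1 by ring, Nat.factorial_succ (2 * n + 1),
    Nat.factorial_succ (2 * n), Nat.factorial_succ n]
  push_cast
  rw [show (2 * (n : ℝ) + 2) = 2 * (n + 1) by ring]
  field_simp
  ring

lemma normCentral_sq_le (n : ℕ) : (2 * n + 1) * normCentral n ^ 2 ≤ 1 := by
  induction n with
  | zero => norm_num [normCentral]
  | succ n ih =>
    refine le_trans ?_ ih
    have h : (2 * (n : ℝ) + 3) * ((2 * n + 1) / (2 * n + 2)) ^ 2 ≤ 2 * n + 1 := by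
      rw [div_pow, ← mul_div_assoc, div_le_iff₀ (by positivity)]
      nlinarith [Nat.cast_nonneg (α := ℝ) n]
    calc (2 * ((n + 1 : ℕ) : ℝ) + 1) * normCentral (n + 1) ^ 2
        = ((2 * (n : ℝ) + 3) * ((2 * n + 1) / (2 * n + 2)) ^ 2) * normCentral n ^ 2 := by
          rw [normCentral_succ]; push_cast; ring
      _ ≤ (2 * n + 1) * normCentral n ^ 2 := by gcongr

lemma tendsto_normCentral : Tendsto normCentral atTop (𝓝 0) := by
  have h : Tendsto (fun n => normCentral n ^ 2) atTop (𝓝 0) := by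
    refine squeeze_zero (fun n => sq_nonneg _) (fun n => ?_)
      (tendsto_one_div_add_atTop_nhds_zero_nat (𝕜 := ℝ))
    rw [le_div_iff₀ (by positivity)]
    nlinarith [normCentral_sq_le n,
      mul_nonneg (Nat.cast_nonneg (α := ℝ) n) (sq_nonneg (normCentral n))]
  have h' := h.sqrt
  simpa [Real.sqrt_sq (normCentral_nonneg _)] using h'

lemma term_eq_sub (k : ℕ) : (Nat.factorial (2 * (k + 2) - 3) : ℝ) /
      ((Nat.factorial k : ℝ) * (Nat.factorial (k + 2) : ℝ) * 2 ^ (2 * (k + 2) - 2)) =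
    normCentral (k + 1) - normCentral (k + 2) := by
  have h : (Nat.factorial k : ℝ) ≠ 0 := by positivity
  have h1 : (k : ℝ) + 1 ≠ 0 := by positivity
  have h2 : (k : ℝ) + 2 ≠ 0 := by positivity
  rw [normCentral_succ (k + 1), normCentral, show 2 * (k + 2) - 3 = 2 * k + 1 by omega,
    show 2 * (k + 2) - 2 = 2 * (k + 1) by omega, pow_mul,
    show 2 * (k + 1) = 2 * k + 1 + 1 by ring, Nat.factorial_succ (2 * k + 1),
    Nat.factorial_succ (k + 1), Nat.factorial_succ k]
  push_cast
  rw [show 2 * ((k : ℝ) + 1) + 2 = 2 * (k + 2) by ring,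
    show (k : ℝ) + 1 + 1 = k + 2 by ring, show (2 : ℝ) ^ 2 = 4 by norm_num]
  field_simp
  ring

/-- `∑_{k=2}^{∞} (2k−3)! / ((k−2)!·k!·2^{2k−2}) = 1/2`; equivalently the row sums
`∑_{k=0}^{∞} qₖ` of the Catalan generator vanish. -/
theorem stmt_9 :
    HasSum (fun k : ℕ => (Nat.factorial (2 * (k + 2) - 3) : ℝ) /
      ((Nat.factorial k : ℝ) * (Nat.factorial (k + 2) : ℝ) * 2 ^ (2 * (k + 2) - 2)))
      (1 / 2) ∧
    HasSum qCoeff 0 := by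
  have main : HasSum (fun k : ℕ => (Nat.factorial (2 * (k + 2) - 3) : ℝ) /
      ((Nat.factorial k : ℝ) * (Nat.factorial (k + 2) : ℝ) * 2 ^ (2 * (k + 2) - 2)))
      (1 / 2) := by
    rw [hasSum_iff_tendsto_nat_of_nonneg (fun k => by positivity)]
    simp_rw [term_eq_sub]
    have hs : ∀ n : ℕ, ∑ k ∈ Finset.range n, (normCentral (k + 1) - normCentral (k + 2)) =
        1 / 2 - normCentral (n + 1) := fun n => by
      rw [Finset.sum_range_sub' (fun k => normCentral (k + 1)), zero_add, normCentral_one]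
    simp_rw [hs]
    simpa using (tendsto_normCentral.comp (tendsto_add_atTop_nat 1)).const_sub (1 / 2 : ℝ)
  refine ⟨main, ?_⟩
  have h0 : (0 : ℝ) - ∑ i ∈ Finset.range 2, qCoeff i = 1 / 2 := by
    norm_num [Finset.sum_range_succ, qCoeff]
  have h2 : (fun k => qCoeff (k + 2)) = fun k : ℕ => (Nat.factorial (2 * (k + 2) - 3) : ℝ) /
      ((Nat.factorial k : ℝ) * (Nat.factorial (k + 2) : ℝ) * 2 ^ (2 * (k + 2) - 2)) := by
    funext k
    simp [qCoeff]
  rw [← hasSum_nat_add_iff' 2, h0, h2]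
  exact main
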